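/- arXiv:2405.02588 — 14 statements merged into one kernel-verified Lean document; each statement's English description precedes it below -/
import Mathlib

section
/- Suppose |f1 - f0 - ⟨g, η⟩ - (1/2)⟨A η, η⟩| ≤ (L_H/2)‖η‖³, ‖G - g‖ ≤ δ_g, and ‖(H - A) η‖ ≤ δ_H ‖η‖. Then f1 - f0 - m(η) ≤ δ_g ‖η‖ + (1/2) δ_H ‖η‖² + (L_H/2 - σ/3) ‖η‖³. (Lemma 3.2 of the paper, the sufficient-decrease estimate.) -/
open RealInnerProductSpace

/-- Lemma 3.2: the sufficient-decrease estimate for the cubic-regularized model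
with inexact gradient and Hessian. -/
theorem inexact_model_decrease_estimate
    {E : Type*} [NormedAddCommGroup E] [InnerProductSpace ℝ E] [FiniteDimensional ℝ E]
    (G g η : E) (H A : E →L[ℝ] E) (hH : IsSelfAdjoint H) (hA : IsSelfAdjoint A)
    (σ L_H δ_g δ_H : ℝ) (hσ : 0 < σ) (hL : 0 < L_H)
    (hδg : δ_g ∈ Set.Ioo (0 : ℝ) 1) (hδH : δ_H ∈ Set.Ioo (0 : ℝ) 1)
    (m : E → ℝ)
    (hm : ∀ ξ : E, m ξ = ⟪G, ξ⟫ + (1 / 2) * ⟪H ξ, ξ⟫ + (σ / 3) * ‖ξ‖ ^ 3)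
    (f0 f1 : ℝ)
    (hTaylor : |f1 - f0 - ⟪g, η⟫ - (1 / 2) * ⟪A η, η⟫| ≤ (L_H / 2) * ‖η‖ ^ 3)
    (hG : ‖G - g‖ ≤ δ_g)
    (hHa : ‖(H - A) η‖ ≤ δ_H * ‖η‖) :
    f1 - f0 - m η ≤ δ_g * ‖η‖ + (1 / 2) * δ_H * ‖η‖ ^ 2 + (L_H / 2 - σ / 3) * ‖η‖ ^ 3 := by
  have h1 := neg_le_of_abs_le (abs_real_inner_le_norm (G - g) η)
  have h2 := neg_le_of_abs_le (abs_real_inner_le_norm ((H - A) η) η)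
  have h3 := mul_le_mul_of_nonneg_right hG (norm_nonneg η)
  have h4 := mul_le_mul_of_nonneg_right hHa (norm_nonneg η)
  have h5 := le_of_abs_le hTaylor
  rw [inner_sub_left] at h1
  rw [ContinuousLinearMap.sub_apply, inner_sub_left] at h2
  rw [ContinuousLinearMap.sub_apply] at h4
  rw [hm]
  nlinarith
end

section
/- Suppose σ ≥ 2 L_H, δ_g ≤ 9 δ_H² / (4σ), |f1 - f0 - ⟨g, η⟩ - (1/2)⟨A η, η⟩| ≤ (L_H/2)‖η‖³, ‖G - g‖ ≤ δ_g, and ‖(H - A) η‖ ≤ δ_H ‖η‖. If ‖η‖ ≥ 9 δ_H / σ, then f1 - f0 - m(η) ≤ 0. (Implication (11) in the proof of Lemma 3.3.) -/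
open RealInnerProductSpace

/-- Implication (11) in the proof of Lemma 3.3: if the step is long enough,
the model overestimates the actual decrease. -/
theorem long_step_model_overestimates
    {E : Type*} [NormedAddCommGroup E] [InnerProductSpace ℝ E] [FiniteDimensional ℝ E]
    (G g η : E) (H A : E →L[ℝ] E) (hH : IsSelfAdjoint H) (hA : IsSelfAdjoint A)
    (σ L_H δ_g δ_H : ℝ) (hσ : 0 < σ) (hL : 0 < L_H)
    (hδg : δ_g ∈ Set.Ioo (0 : ℝ) 1) (hδH : δ_H ∈ Set.Ioo (0 : ℝ) 1)
    (m : E → ℝ)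
    (hm : ∀ ξ : E, m ξ = ⟪G, ξ⟫ + (1 / 2) * ⟪H ξ, ξ⟫ + (σ / 3) * ‖ξ‖ ^ 3)
    (f0 f1 : ℝ)
    (hσL : σ ≥ 2 * L_H)
    (hδgH : δ_g ≤ 9 * δ_H ^ 2 / (4 * σ))
    (hTaylor : |f1 - f0 - ⟪g, η⟫ - (1 / 2) * ⟪A η, η⟫| ≤ (L_H / 2) * ‖η‖ ^ 3)
    (hG : ‖G - g‖ ≤ δ_g)
    (hHa : ‖(H - A) η‖ ≤ δ_H * ‖η‖)
    (hlong : ‖η‖ ≥ 9 * δ_H / σ) :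
    f1 - f0 - m η ≤ 0 := by
  obtain ⟨hd0, -⟩ := hδH
  have ht : 0 ≤ ‖η‖ := norm_nonneg η
  have h1 : ⟪g - G, η⟫ ≤ δ_g * ‖η‖ := by
    refine (real_inner_le_norm _ _).trans ?_
    rw [norm_sub_rev]
    exact mul_le_mul_of_nonneg_right hG ht
  have h2 : ⟪-((H - A) η), η⟫ ≤ δ_H * ‖η‖ * ‖η‖ := by
    refine (real_inner_le_norm _ _).trans ?_
    rw [norm_neg]
    exact mul_le_mul_of_nonneg_right hHa ht
  rw [inner_sub_left] at h1
  rw [inner_neg_left, ContinuousLinearMap.sub_apply, inner_sub_left] at h2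
  have h3 := (abs_le.mp hTaylor).2
  rw [hm]
  generalize ‖η‖ = t at *
  have hu : 9 * δ_H ≤ σ * t := by
    have := (div_le_iff₀ hσ).mp hlong
    linarith
  have hg : δ_g * (4 * σ) ≤ 9 * δ_H ^ 2 := (le_div_iff₀ (by positivity)).mp hδgH
  have hL3 : L_H / 2 * t ^ 3 ≤ σ / 4 * t ^ 3 :=
    mul_le_mul_of_nonneg_right (by linarith) (by positivity)
  have hk : 0 ≤ (σ * t - 9 * δ_H) * (σ * t + 3 * δ_H) :=
    mul_nonneg (by linarith) (by linarith)
  have hq : δ_g + δ_H * t / 2 - σ / 12 * t ^ 2 ≤ 0 := by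
    have : σ * (δ_g + δ_H * t / 2 - σ / 12 * t ^ 2) ≤ 0 := by nlinarith
    exact nonpos_of_mul_nonpos_right this hσ
  have hf := mul_nonpos_of_nonneg_of_nonpos ht hq
  have e : t * (δ_g + δ_H * t / 2 - σ / 12 * t ^ 2)
      = δ_g * t + δ_H * t * t / 2 - σ / 3 * t ^ 3 + σ / 4 * t ^ 3 := by ring
  linarith
end

section
/- Suppose σ ≥ 2 L_H, δ_g ≤ 9 δ_H² / (4σ), |f1 - f0 - ⟨g, η⟩ - (1/2)⟨A η, η⟩| ≤ (L_H/2)‖η‖³, ‖G - g‖ ≤ δ_g, and ‖(H - A) η‖ ≤ δ_H ‖η‖. Let ζ ∈ E satisfy ‖ζ‖ ≥ 9 δ_H / σ, and assume that either ‖η‖ ≤ ‖ζ‖ or ‖η‖ ≥ 9 δ_H / σ. Then f1 - f0 - m(η) ≤ (3/4) δ_H ‖ζ‖². (Estimates (13)–(15) and (16)–(18) in the proof of Lemma 3.3.) -/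
open RealInnerProductSpace

/-- Estimates (13)–(15) and (16)–(18) in the proof of Lemma 3.3. -/
theorem model_error_bound_by_reference_step
    {E : Type*} [NormedAddCommGroup E] [InnerProductSpace ℝ E] [FiniteDimensional ℝ E]
    (G g η ζ : E) (H A : E →L[ℝ] E) (hH : IsSelfAdjoint H) (hA : IsSelfAdjoint A)
    (σ L_H δ_g δ_H : ℝ) (hσ : 0 < σ) (hL : 0 < L_H)
    (hδg : δ_g ∈ Set.Ioo (0 : ℝ) 1) (hδH : δ_H ∈ Set.Ioo (0 : ℝ) 1)
    (m : E → ℝ)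
    (hm : ∀ ξ : E, m ξ = ⟪G, ξ⟫ + (1 / 2) * ⟪H ξ, ξ⟫ + (σ / 3) * ‖ξ‖ ^ 3)
    (f0 f1 : ℝ)
    (hσL : σ ≥ 2 * L_H)
    (hδgH : δ_g ≤ 9 * δ_H ^ 2 / (4 * σ))
    (hTaylor : |f1 - f0 - ⟪g, η⟫ - (1 / 2) * ⟪A η, η⟫| ≤ (L_H / 2) * ‖η‖ ^ 3)
    (hG : ‖G - g‖ ≤ δ_g)
    (hHa : ‖(H - A) η‖ ≤ δ_H * ‖η‖)
    (hζ : ‖ζ‖ ≥ 9 * δ_H / σ)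
    (hcase : ‖η‖ ≤ ‖ζ‖ ∨ ‖η‖ ≥ 9 * δ_H / σ) :
    f1 - f0 - m η ≤ (3 / 4) * δ_H * ‖ζ‖ ^ 2 := by
  obtain ⟨hd0, hd1⟩ := hδH
  have h1 : -⟪G - g, η⟫ ≤ δ_g * ‖η‖ :=
    (neg_le_abs _).trans ((abs_real_inner_le_norm _ _).trans
      (mul_le_mul_of_nonneg_right hG (norm_nonneg _)))
  have h2 : -⟪(H - A) η, η⟫ ≤ δ_H * ‖η‖ * ‖η‖ :=
    (neg_le_abs _).trans ((abs_real_inner_le_norm _ _).trans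
      (mul_le_mul_of_nonneg_right hHa (norm_nonneg _)))
  rw [inner_sub_left] at h1
  rw [ContinuousLinearMap.sub_apply, inner_sub_left] at h2
  have h3 := (abs_le.mp hTaylor).2
  rw [hm]
  have ht : 0 ≤ ‖η‖ := norm_nonneg _
  generalize ‖η‖ = t at *
  generalize ‖ζ‖ = z at *
  obtain ⟨r, hr⟩ : ∃ r, r = 9 * δ_H / σ := ⟨_, rfl⟩
  have hrs : r * σ = 9 * δ_H := by rw [hr]; field_simp
  have hr0 : 0 < r := by rw [hr]; positivity
  have hg : δ_g ≤ δ_H * r / 4 := by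
    refine hδgH.trans (le_of_eq ?_)
    rw [hr]; field_simp
  rw [← hr] at hζ hcase
  have h4 : δ_g * t ≤ δ_H * r / 4 * t := mul_le_mul_of_nonneg_right hg ht
  have h5 : L_H / 2 * t ^ 3 ≤ σ / 4 * t ^ 3 :=
    mul_le_mul_of_nonneg_right (by linarith) (by positivity)
  rcases hcase with h | h
  · have h6 : r * t ≤ z * z := mul_le_mul hζ h ht (by linarith)
    have h7 : t * t ≤ z * z := mul_le_mul h h ht (by linarith)
    have h8 := mul_le_mul_of_nonneg_left h6 hd0.le
    have h9 := mul_le_mul_of_nonneg_left h7 hd0.le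
    have h10 : 0 ≤ σ * t ^ 3 := by positivity
    linarith
  · have h6 : δ_H * (r * t) ≤ δ_H * (t * t) :=
      mul_le_mul_of_nonneg_left (mul_le_mul_of_nonneg_right h ht) hd0.le
    have h7 : (r * σ) * t ^ 2 ≤ (t * σ) * t ^ 2 := by gcongr
    rw [hrs] at h7
    have h8 : 0 ≤ δ_H * z ^ 2 := by positivity
    linarith
end

section
/- Let G ≠ 0, ‖H‖ ≤ K_H with K_H > 0, and let η^C := -α G where α ≥ 0 is a global minimizer of t ↦ m(-t G) over t ≥ 0. Then -m(η^C) ≥ max{ (1/12)‖η^C‖² (√(K_H² + 4σ‖G‖) - K_H), (‖G‖/(2√3)) · min{ ‖G‖/K_H, √(‖G‖/σ) } }. (Inequality (2) of Lemma 3.1, the Cauchy-point decrease bound.) -/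
open RealInnerProductSpace

theorem cauchy_aux (g c K σ s : ℝ) (hg : 0 < g) (hK : 0 < K) (hc : c ≤ K) (hσ : 0 < σ)
    (hs : 0 ≤ s)
    (hmin : ∀ u : ℝ, 0 ≤ u → -g * s + c / 2 * s ^ 2 + σ / 3 * s ^ 3
      ≤ -g * u + c / 2 * u ^ 2 + σ / 3 * u ^ 3) :
    (1 / 12) * s ^ 2 * (Real.sqrt (K ^ 2 + 4 * σ * g) - K)
      ≤ -(-g * s + c / 2 * s ^ 2 + σ / 3 * s ^ 3) ∧
    (g / (2 * Real.sqrt 3)) * min (g / K) (Real.sqrt (g / σ))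
      ≤ -(-g * s + c / 2 * s ^ 2 + σ / 3 * s ^ 3) := by
  have h2 : (g / (2 * Real.sqrt 3)) * min (g / K) (Real.sqrt (g / σ))
      ≤ -(-g * s + c / 2 * s ^ 2 + σ / 3 * s ^ 3) := by
    set M := min (g / K) (Real.sqrt (g / σ)) with hM
    have hM0 : 0 < M := lt_min (by positivity) (by positivity)
    have h1 : M * K ≤ g := (le_div_iff₀ hK).1 (min_le_left _ _)
    have h3 : M ^ 2 * σ ≤ g := by
      have h4 : M ^ 2 ≤ g / σ := by
        have := Real.sq_sqrt (show 0 ≤ g / σ by positivity)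
        rw [← this]
        exact pow_le_pow_left₀ hM0.le (min_le_right _ _) 2
      exact (le_div_iff₀ hσ).1 h4
    have h5 := hmin (M / 2) (by positivity)
    have h6 : g / (2 * Real.sqrt 3) ≤ g / 3 := by
      apply div_le_div_of_nonneg_left hg.le (by norm_num)
      have : (3 / 2 : ℝ) ≤ Real.sqrt 3 := Real.le_sqrt_of_sq_le (by norm_num)
      linarith
    have h7 := mul_le_mul_of_nonneg_right h6 hM0.le
    have h8 : c * M ^ 2 ≤ g * M := by
      have := mul_le_mul_of_nonneg_right hc (sq_nonneg M)
      nlinarith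
    have h9 : σ * M ^ 3 ≤ g * M := by nlinarith
    nlinarith
  refine ⟨?_, h2⟩
  have hpos : 0 < (g / (2 * Real.sqrt 3)) * min (g / K) (Real.sqrt (g / σ)) :=
    mul_pos (by positivity) (lt_min (by positivity) (by positivity))
  have hs0 : 0 < s := by
    rcases hs.lt_or_eq with h | h
    · exact h
    · subst h
      norm_num at h2
      linarith
  have hd : HasDerivAt (fun u : ℝ => -g * u + c / 2 * u ^ 2 + σ / 3 * u ^ 3)
      (-g * 1 + c / 2 * (2 * s) + σ / 3 * (3 * s ^ 2)) s := by
    have a1 := (hasDerivAt_id s).const_mul (-g)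
    have a2 := (hasDerivAt_pow 2 s).const_mul (c / 2)
    have a3 := (hasDerivAt_pow 3 s).const_mul (σ / 3)
    refine HasDerivAt.congr_deriv (f := fun u : ℝ => -g * u + c / 2 * u ^ 2 + σ / 3 * u ^ 3)
      ((a1.add a2).add a3) ?_
    norm_num
  have hl : IsLocalMin (fun u : ℝ => -g * u + c / 2 * u ^ 2 + σ / 3 * u ^ 3) s := by
    filter_upwards [lt_mem_nhds hs0] with u hu
    exact hmin u hu.le
  have h0 := hl.hasDerivAt_eq_zero hd
  have hst : s * (σ * s + c) = g := by linarith
  have hp : 0 < σ * s + c := by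
    by_contra h
    nlinarith
  set R := Real.sqrt (K ^ 2 + 4 * σ * g) with hR
  have hR2 : R ^ 2 = K ^ 2 + 4 * σ * g := Real.sq_sqrt (by positivity)
  have hle : R ≤ 2 * σ * s + K := by
    apply Real.sqrt_le_iff.2
    refine ⟨by positivity, ?_⟩
    have : g ≤ s * (σ * s + K) := by rw [← hst]; gcongr
    nlinarith
  have key : (1 / 12) * (R - K) ≤ 2 / 3 * σ * s + c / 2 := by linarith
  have := mul_le_mul_of_nonneg_right key (sq_nonneg s)
  rw [← hst]
  linarith

/-- Inequality (2) of Lemma 3.1: the Cauchy-point decrease bound. -/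
theorem cauchy_point_decrease
    {E : Type*} [NormedAddCommGroup E] [InnerProductSpace ℝ E] [FiniteDimensional ℝ E]
    (G : E) (hG : G ≠ 0) (H : E →L[ℝ] E) (hH : IsSelfAdjoint H)
    (K_H : ℝ) (hK : 0 < K_H) (hHK : ‖H‖ ≤ K_H)
    (σ : ℝ) (hσ : 0 < σ)
    (m : E → ℝ)
    (hm : ∀ ξ : E, m ξ = ⟪G, ξ⟫ + (1 / 2) * ⟪H ξ, ξ⟫ + (σ / 3) * ‖ξ‖ ^ 3)
    (α : ℝ) (hα : 0 ≤ α)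
    (hmin : ∀ t : ℝ, 0 ≤ t → m (-(α • G)) ≤ m (-(t • G)))
    (ηC : E) (hηC : ηC = -(α • G)) :
    -m ηC ≥
      max ((1 / 12) * ‖ηC‖ ^ 2 * (Real.sqrt (K_H ^ 2 + 4 * σ * ‖G‖) - K_H))
        ((‖G‖ / (2 * Real.sqrt 3)) * min (‖G‖ / K_H) (Real.sqrt (‖G‖ / σ))) := by
  subst hηC
  have hg : 0 < ‖G‖ := norm_pos_iff.2 hG
  set g := ‖G‖ with hgd
  set c := ⟪H G, G⟫ / g ^ 2 with hcd
  have hc : c ≤ K_H := by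
    rw [hcd, div_le_iff₀ (by positivity)]
    calc ⟪H G, G⟫ ≤ ‖H G‖ * ‖G‖ := real_inner_le_norm _ _
      _ ≤ (‖H‖ * ‖G‖) * ‖G‖ := by gcongr; exact H.le_opNorm G
      _ ≤ (K_H * ‖G‖) * ‖G‖ := by gcongr
      _ = K_H * g ^ 2 := by ring
  have hcg : ⟪H G, G⟫ = c * g ^ 2 := by rw [hcd]; field_simp
  have hn : ∀ t : ℝ, 0 ≤ t → ‖-(t • G)‖ = t * g := by
    intro t ht
    rw [norm_neg, norm_smul, Real.norm_of_nonneg ht]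
  have hmt : ∀ t : ℝ, 0 ≤ t → m (-(t • G)) =
      -g * (t * g) + c / 2 * (t * g) ^ 2 + σ / 3 * (t * g) ^ 3 := by
    intro t ht
    rw [hm, hn t ht]
    simp only [map_neg, map_smul, inner_neg_left, inner_neg_right, real_inner_smul_left,
      real_inner_smul_right, real_inner_self_eq_norm_sq, hcg, ← hgd]
    ring
  have := cauchy_aux g c K_H σ (α * g) hg hK hc hσ (by positivity) (by
    intro u hu
    have h := hmin (u / g) (by positivity)
    rw [hmt α hα, hmt _ (by positivity), div_mul_cancel₀ _ hg.ne'] at h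
    exact h)
  rw [hmt α hα, hn α hα]
  exact max_le this.1 this.2
end

section
/- Let G ≠ 0, ‖H‖ ≤ K_H with K_H > 0, and let η^C := -α G where α ≥ 0 is a global minimizer of t ↦ m(-t G) over t ≥ 0. Then ‖η^C‖ ≥ (1/(2σ)) (√(K_H² + 4σ‖G‖) - K_H). (Inequality (4) of Lemma 3.1, the Cauchy-step length bound.) -/
open RealInnerProductSpace

/-- Inequality (4) of Lemma 3.1: the Cauchy-step length bound. -/
theorem cauchy_point_length
    {E : Type*} [NormedAddCommGroup E] [InnerProductSpace ℝ E] [FiniteDimensional ℝ E]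
    (G : E) (hG : G ≠ 0) (H : E →L[ℝ] E) (hH : IsSelfAdjoint H)
    (K_H : ℝ) (hK : 0 < K_H) (hHK : ‖H‖ ≤ K_H)
    (σ : ℝ) (hσ : 0 < σ)
    (m : E → ℝ)
    (hm : ∀ ξ : E, m ξ = ⟪G, ξ⟫ + (1 / 2) * ⟪H ξ, ξ⟫ + (σ / 3) * ‖ξ‖ ^ 3)
    (α : ℝ) (hα : 0 ≤ α)
    (hmin : ∀ t : ℝ, 0 ≤ t → m (-(α • G)) ≤ m (-(t • G)))
    (ηC : E) (hηC : ηC = -(α • G)) :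
    ‖ηC‖ ≥ (1 / (2 * σ)) * (Real.sqrt (K_H ^ 2 + 4 * σ * ‖G‖) - K_H) := by
  have hg : 0 < ‖G‖ := norm_pos_iff.mpr hG
  have hh : ⟪H G, G⟫ ≤ K_H * ‖G‖ ^ 2 := by
    have h1 := real_inner_le_norm (H G) G
    have h2 := H.le_opNorm G
    have h3 : ‖H‖ * ‖G‖ ≤ K_H * ‖G‖ := by gcongr
    nlinarith
  have hφ : ∀ t : ℝ, 0 ≤ t → m (-(t • G)) =
      -t * ‖G‖ ^ 2 + t ^ 2 * ⟪H G, G⟫ / 2 + σ / 3 * t ^ 3 * ‖G‖ ^ 3 := by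
    intro t ht
    rw [hm]
    simp only [map_neg, map_smul, inner_neg_left, inner_neg_right, inner_smul_left,
      inner_smul_right, norm_neg, norm_smul, Real.norm_eq_abs, abs_of_nonneg ht,
      real_inner_self_eq_norm_sq, conj_trivial]
    ring
  have hn : ‖ηC‖ = α * ‖G‖ := by
    rw [hηC, norm_neg, norm_smul, Real.norm_eq_abs, abs_of_nonneg hα]
  rw [hn]
  generalize ⟪H G, G⟫ = h at *
  generalize ‖G‖ = g at *
  have hD : 0 ≤ -g ^ 2 + α * h + σ * α ^ 2 * g ^ 3 := by
    by_contra! hneg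
    obtain ⟨D, hDe⟩ : ∃ D, D = -g ^ 2 + α * h + σ * α ^ 2 * g ^ 3 := ⟨_, rfl⟩
    rw [← hDe] at hneg
    obtain ⟨B, hB⟩ : ∃ B, B = |h| / 2 + σ * g ^ 3 * α + σ * g ^ 3 / 3 + 1 := ⟨_, rfl⟩
    have hBpos : 0 < B := by rw [hB]; positivity
    obtain ⟨s, hs⟩ : ∃ s, s = min 1 (-D / (2 * B)) := ⟨_, rfl⟩
    have hs0 : 0 < s := by
      rw [hs]; exact lt_min one_pos (div_pos (by linarith) (by positivity))
    have hs1 : s ≤ 1 := hs ▸ min_le_left _ _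
    have hs2 : s * (2 * B) ≤ -D := by
      rw [← le_div_iff₀ (by positivity)]; exact hs ▸ min_le_right _ _
    have key := hmin (α + s) (by linarith)
    rw [hφ α hα, hφ (α + s) (by linarith)] at key
    have e : 0 ≤ s * (D + s * (h / 2 + σ * g ^ 3 * α + s * (σ * g ^ 3 / 3))) := by
      rw [hDe]; linarith
    have e2 := nonneg_of_mul_nonneg_right e hs0
    have c3 : 0 ≤ σ * g ^ 3 / 3 := by positivity
    have e3 : h / 2 + σ * g ^ 3 * α + s * (σ * g ^ 3 / 3) ≤ B := by
      have := le_abs_self h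
      rw [hB]; nlinarith
    have e4 := mul_le_mul_of_nonneg_left e3 hs0.le
    linarith
  have h1 : g ≤ K_H * (α * g) + σ * (α * g) ^ 2 := by
    have h2 : α * h ≤ α * (K_H * g ^ 2) := by gcongr
    have h3 : 0 ≤ g * (K_H * (α * g) + σ * (α * g) ^ 2 - g) := by linarith
    have := nonneg_of_mul_nonneg_right h3 hg
    linarith
  have h4 : Real.sqrt (K_H ^ 2 + 4 * σ * g) ≤ 2 * σ * (α * g) + K_H := by
    apply Real.sqrt_le_iff.mpr
    refine ⟨by positivity, ?_⟩
    nlinarith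
  rw [ge_iff_le, one_div, inv_mul_le_iff₀ (by positivity)]
  linarith
end

section
/- Let ν ∈ (0,1), let u ∈ E be a unit vector with ⟨u, H u⟩ ≤ ν λ_min(H) < 0 and ⟨G, u⟩ ≤ 0, and let η^E := t* u where t* ≥ 0 is a global minimizer of t ↦ m(t u) over t ≥ 0. Then -m(η^E) ≥ (ν |λ_min(H)| / 6) · max{ ‖η^E‖², ν² |λ_min(H)|² / σ² }. (Inequality (3) of Lemma 3.1, the eigenpoint decrease bound.) -/
open RealInnerProductSpace

/-- Inequality (3) of Lemma 3.1: the eigenpoint decrease bound. -/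
theorem eigen_point_decrease
    {E : Type*} [NormedAddCommGroup E] [InnerProductSpace ℝ E] [FiniteDimensional ℝ E]
    (G : E) (H : E →L[ℝ] E) (hH : IsSelfAdjoint H)
    (σ : ℝ) (hσ : 0 < σ)
    (m : E → ℝ)
    (hm : ∀ ξ : E, m ξ = ⟪G, ξ⟫ + (1 / 2) * ⟪H ξ, ξ⟫ + (σ / 3) * ‖ξ‖ ^ 3)
    (lammin : ℝ)
    (hlam : lammin = sInf ((fun u : E => ⟪u, H u⟫) '' {u : E | ‖u‖ = 1}))
    (ν : ℝ) (hν : ν ∈ Set.Ioo (0 : ℝ) 1)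
    (u : E) (hu : ‖u‖ = 1)
    (hcurv : ⟪u, H u⟫ ≤ ν * lammin) (hneg : ν * lammin < 0)
    (hGu : ⟪G, u⟫ ≤ 0)
    (tstar : ℝ) (ht : 0 ≤ tstar)
    (hmin : ∀ t : ℝ, 0 ≤ t → m (tstar • u) ≤ m (t • u))
    (ηE : E) (hηE : ηE = tstar • u) :
    -m ηE ≥ (ν * |lammin| / 6) * max (‖ηE‖ ^ 2) (ν ^ 2 * |lammin| ^ 2 / σ ^ 2) := by
  obtain ⟨hν0, hν1⟩ := hν
  have hl : lammin < 0 := by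
    by_contra hc
    push Not at hc
    nlinarith [mul_nonneg hν0.le hc]
  have hf : ∀ t : ℝ, 0 ≤ t →
      m (t • u) = ⟪G, u⟫ * t + ⟪u, H u⟫ * t ^ 2 / 2 + σ * t ^ 3 / 3 := by
    intro t ht0
    rw [hm, map_smul, real_inner_smul_right, real_inner_smul_right, real_inner_smul_left,
      norm_smul, hu, Real.norm_of_nonneg ht0, real_inner_comm u (H u)]
    ring
  have hn : ‖ηE‖ = tstar := by
    rw [hηE, norm_smul, hu, Real.norm_of_nonneg ht, mul_one]
  rw [hn, hηE, abs_of_neg hl]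
  generalize ⟪G, u⟫ = g at *
  generalize ⟪u, H u⟫ = h at *
  obtain ⟨k, hk⟩ : ∃ k, k = ν * -lammin := ⟨_, rfl⟩
  have hk0 : 0 < k := by rw [hk]; linarith
  have hhk : h ≤ -k := by rw [hk]; linarith
  rw [← mul_pow, ← hk]
  have h1 : k / 6 * tstar ^ 2 ≤ -m (tstar • u) := by
    rcases ht.eq_or_lt with h0 | h0
    · rw [hf _ ht, ← h0]; simp
    · have hd : HasDerivAt (fun t : ℝ => g * t + h * t ^ 2 / 2 + σ * t ^ 3 / 3)
          (g + h * tstar + σ * tstar ^ 2) tstar := by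
        have := (((hasDerivAt_id tstar).const_mul g).add
          ((((hasDerivAt_id tstar).pow 2).const_mul h).div_const 2)).add
          ((((hasDerivAt_id tstar).pow 3).const_mul σ).div_const 3)
        refine HasDerivAt.congr_deriv (f := fun t : ℝ => g * t + h * t ^ 2 / 2 + σ * t ^ 3 / 3)
          this ?_
        simp
        ring
      have hlm : IsLocalMin (fun t : ℝ => g * t + h * t ^ 2 / 2 + σ * t ^ 3 / 3) tstar := by
        filter_upwards [lt_mem_nhds h0] with t h2
        have := hmin t h2.le
        rwa [hf _ ht, hf _ h2.le] at this
      have hz := hlm.hasDerivAt_eq_zero hd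
      have e : -m (tstar • u) = -(2 / 3) * (g * tstar) - h * tstar ^ 2 / 6 := by
        rw [hf _ ht]; linear_combination (-tstar / 3) * hz
      rw [e]
      nlinarith [mul_nonneg (neg_nonneg.2 hGu) ht,
        mul_le_mul_of_nonneg_right hhk (sq_nonneg tstar)]
  have h2 : k / 6 * (k ^ 2 / σ ^ 2) ≤ -m (tstar • u) := by
    have hs : 0 < k / σ := div_pos hk0 hσ
    have := hmin (k / σ) hs.le
    rw [hf _ hs.le] at this
    obtain ⟨s, hs'⟩ : ∃ s, s = k / σ := ⟨_, rfl⟩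
    rw [← div_pow]
    rw [← hs'] at this hs ⊢
    have e : σ * s ^ 3 = k * s ^ 2 := by rw [hs']; field_simp
    nlinarith [mul_nonneg (neg_nonneg.2 hGu) hs.le,
        mul_le_mul_of_nonneg_right hhk (sq_nonneg s)]
  rcases max_choice (tstar ^ 2) (k ^ 2 / σ ^ 2) with hx | hx <;> rw [hx] <;> assumption
end

section
/- Let ν ∈ (0,1), let u ∈ E be a unit vector with ⟨u, H u⟩ ≤ ν λ_min(H) < 0 and ⟨G, u⟩ ≤ 0, and let η^E := t* u where t* ≥ 0 is a global minimizer of t ↦ m(t u) over t ≥ 0. Then ‖η^E‖ ≥ ν |λ_min(H)| / σ. (Inequality (5) of Lemma 3.1, the eigenstep length bound.) -/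
open RealInnerProductSpace

/-- Inequality (5) of Lemma 3.1: the eigenstep length bound. -/
theorem eigen_point_length
    {E : Type*} [NormedAddCommGroup E] [InnerProductSpace ℝ E] [FiniteDimensional ℝ E]
    (G : E) (H : E →L[ℝ] E) (hH : IsSelfAdjoint H)
    (σ : ℝ) (hσ : 0 < σ)
    (m : E → ℝ)
    (hm : ∀ ξ : E, m ξ = ⟪G, ξ⟫ + (1 / 2) * ⟪H ξ, ξ⟫ + (σ / 3) * ‖ξ‖ ^ 3)
    (lammin : ℝ)
    (hlam : lammin = sInf ((fun u : E => ⟪u, H u⟫) '' {u : E | ‖u‖ = 1}))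
    (ν : ℝ) (hν : ν ∈ Set.Ioo (0 : ℝ) 1)
    (u : E) (hu : ‖u‖ = 1)
    (hcurv : ⟪u, H u⟫ ≤ ν * lammin) (hneg : ν * lammin < 0)
    (hGu : ⟪G, u⟫ ≤ 0)
    (tstar : ℝ) (ht : 0 ≤ tstar)
    (hmin : ∀ t : ℝ, 0 ≤ t → m (tstar • u) ≤ m (t • u))
    (ηE : E) (hηE : ηE = tstar • u) :
    ‖ηE‖ ≥ ν * |lammin| / σ := by
  have hν0 := hν.1
  have hl : lammin < 0 := by
    by_contra hc
    push Not at hc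
    have := mul_nonneg hν0.le hc
    linarith
  have hphi : ∀ t : ℝ, 0 ≤ t →
      m (t • u) = t * ⟪G, u⟫ + (1 / 2) * (t ^ 2 * ⟪u, H u⟫) + (σ / 3) * t ^ 3 := by
    intro t h0
    rw [hm, norm_smul, hu, Real.norm_of_nonneg h0, map_smul, inner_smul_right, inner_smul_right,
      real_inner_smul_left, real_inner_comm u (H u)]
    ring
  rw [hηE, norm_smul, hu, Real.norm_of_nonneg ht, mul_one, abs_of_neg hl, ge_iff_le]
  by_contra hlt
  push Not at hlt
  obtain ⟨T, hT⟩ : ∃ T, T = ν * -lammin / σ := ⟨_, rfl⟩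
  rw [← hT] at hlt
  have hσT : ν * lammin = -(σ * T) := by
    rw [hT]; field_simp
  have hT0 : 0 < T := lt_of_le_of_lt ht hlt
  have h := hmin T hT0.le
  rw [hphi _ ht, hphi _ hT0.le] at h
  rw [hσT] at hcurv
  have h1 : 0 ≤ (T - tstar) * -⟪G, u⟫ := mul_nonneg (by linarith) (by linarith)
  have h2 : 0 ≤ ((T - tstar) * (T + tstar)) * (-(σ * T) - ⟪u, H u⟫) :=
    mul_nonneg (mul_nonneg (by linarith) (by linarith)) (by linarith)
  have h3 : 0 < σ * (T - tstar) ^ 2 * (T + 2 * tstar) := by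
    have : 0 < T - tstar := by linarith
    positivity
  nlinarith [h, h1, h2, h3]
end

section
/- Assume: ‖H‖ ≤ K_H; |f1 - f0 - ⟨g, η⟩ - (1/2)⟨A η, η⟩| ≤ (L_H/2)‖η‖³; ‖G - g‖ ≤ δ_g; ‖(H - A) η‖ ≤ δ_H ‖η‖; σ ≥ 2 L_H; δ_g ≤ 9 δ_H² / (4σ); η^C := -α G where α ≥ 0 is a global minimizer of t ↦ m(-t G) over t ≥ 0; m(η) ≤ m(η^C); ‖G‖ > ε_g; and δ_H ≤ min{1/18, (1-ρ_TH)/9} · (√(K_H² + 4σ ε_g) - K_H). Then f0 - f1 ≥ ρ_TH · (-m(η)), i.e., the acceptance ratio ρ = (f0 - f1)/(-m(η)) satisfies ρ ≥ ρ_TH. (Lemma 3.3, case (a).) -/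
open RealInnerProductSpace

set_option maxHeartbeats 1000000 in
/-- Lemma 3.3, case (a): with a large inexact gradient and sufficiently accurate
gradient/Hessian approximations, the iteration is successful. -/
theorem success_criterion_gradient_case
    {E : Type*} [NormedAddCommGroup E] [InnerProductSpace ℝ E] [FiniteDimensional ℝ E]
    (G g η : E) (H A : E →L[ℝ] E) (hH : IsSelfAdjoint H) (hA : IsSelfAdjoint A)
    (σ L_H K_H δ_g δ_H ε_g ρ_TH : ℝ) (hσ : 0 < σ) (hL : 0 < L_H) (hK : 0 < K_H)
    (hδg : δ_g ∈ Set.Ioo (0 : ℝ) 1) (hδH : δ_H ∈ Set.Ioo (0 : ℝ) 1)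
    (hεg : ε_g ∈ Set.Ioo (0 : ℝ) 1) (hρ : ρ_TH ∈ Set.Ioo (0 : ℝ) 1)
    (m : E → ℝ)
    (hm : ∀ ξ : E, m ξ = ⟪G, ξ⟫ + (1 / 2) * ⟪H ξ, ξ⟫ + (σ / 3) * ‖ξ‖ ^ 3)
    (f0 f1 : ℝ)
    (hHK : ‖H‖ ≤ K_H)
    (hTaylor : |f1 - f0 - ⟪g, η⟫ - (1 / 2) * ⟪A η, η⟫| ≤ (L_H / 2) * ‖η‖ ^ 3)
    (hGg : ‖G - g‖ ≤ δ_g)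
    (hHa : ‖(H - A) η‖ ≤ δ_H * ‖η‖)
    (hσL : σ ≥ 2 * L_H)
    (hδgH : δ_g ≤ 9 * δ_H ^ 2 / (4 * σ))
    (α : ℝ) (hα : 0 ≤ α)
    (hmin : ∀ t : ℝ, 0 ≤ t → m (-(α • G)) ≤ m (-(t • G)))
    (ηC : E) (hηC : ηC = -(α • G))
    (hmη : m η ≤ m ηC)
    (hGbig : ‖G‖ > ε_g)
    (hδHsmall : δ_H ≤ min (1 / 18) ((1 - ρ_TH) / 9) * (Real.sqrt (K_H ^ 2 + 4 * σ * ε_g) - K_H)) :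
    f0 - f1 ≥ ρ_TH * (-m η) := by
  obtain ⟨hδ0, -⟩ := hδH
  obtain ⟨hε0, -⟩ := hεg
  obtain ⟨hρ0, hρ1⟩ := hρ
  obtain ⟨r, hr⟩ : ∃ r, r = (Real.sqrt (K_H ^ 2 + 4 * σ * ε_g) - K_H) / (2 * σ) := ⟨_, rfl⟩
  have hD : Real.sqrt (K_H ^ 2 + 4 * σ * ε_g) - K_H = 2 * σ * r := by
    rw [hr]; field_simp
  have hsq : Real.sqrt (K_H ^ 2 + 4 * σ * ε_g) ^ 2 = K_H ^ 2 + 4 * σ * ε_g :=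
    Real.sq_sqrt (by positivity)
  have hDpos : K_H < Real.sqrt (K_H ^ 2 + 4 * σ * ε_g) :=
    Real.lt_sqrt_of_sq_lt (by nlinarith [mul_pos hσ hε0])
  have hr0 : 0 < r := by
    rw [hr]; exact div_pos (by linarith) (by positivity)
  have hεr : ε_g = K_H * r + σ * r ^ 2 := by
    have h1 : Real.sqrt (K_H ^ 2 + 4 * σ * ε_g) = 2 * σ * r + K_H := by linarith
    rw [h1] at hsq
    have h2 : (4 * σ) * ε_g = (4 * σ) * (K_H * r + σ * r ^ 2) := by nlinarith
    exact mul_left_cancel₀ (by positivity) h2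
  have hG0 : 0 < ‖G‖ := by linarith
  rw [hD] at hδHsmall
  have hd1 : δ_H ≤ σ * r / 9 := by
    have := mul_le_mul_of_nonneg_right (min_le_left (1 / 18 : ℝ) ((1 - ρ_TH) / 9))
      (by positivity : 0 ≤ 2 * σ * r)
    linarith
  have hd2 : δ_H ≤ (1 - ρ_TH) / 9 * (2 * σ * r) :=
    hδHsmall.trans (mul_le_mul_of_nonneg_right (min_le_right _ _) (by positivity))
  have hHξ : ∀ ξ : E, ⟪H ξ, ξ⟫ ≤ K_H * ‖ξ‖ ^ 2 := by
    intro ξ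
    have h1 := real_inner_le_norm (H ξ) ξ
    have h2 : ‖H ξ‖ ≤ K_H * ‖ξ‖ := H.le_of_opNorm_le hHK ξ
    nlinarith [mul_le_mul_of_nonneg_right h2 (norm_nonneg ξ)]
  -- Cauchy decrease
  have hC : m η ≤ -(2 / 3 * σ * r ^ 3) := by
    have h1 := hmin (r / ‖G‖) (by positivity)
    rw [← hηC] at h1
    have hn : ‖-((r / ‖G‖) • G)‖ = r := by
      rw [norm_neg, norm_smul, Real.norm_of_nonneg (by positivity)]
      field_simp
    have h2 := hHξ (-((r / ‖G‖) • G))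
    have h3 : ⟪G, -((r / ‖G‖) • G)⟫ = -(r * ‖G‖) := by
      rw [inner_neg_right, real_inner_smul_right, real_inner_self_eq_norm_sq]
      field_simp
    rw [hm (-((r / ‖G‖) • G)), h3, hn] at h1
    rw [hn] at h2
    have h4 : r * ε_g ≤ r * ‖G‖ := mul_le_mul_of_nonneg_left hGbig.le hr0.le
    have h5 : r * ε_g = K_H * r ^ 2 + σ * r ^ 3 := by rw [hεr]; ring
    have h6 : 0 ≤ K_H * r ^ 2 := by positivity
    linarith
  -- model error
  have hs : 0 ≤ ‖η‖ := norm_nonneg η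
  obtain ⟨s, hsd⟩ : ∃ s, s = ‖η‖ := ⟨_, rfl⟩
  have herr : f1 - f0 - m η ≤ δ_g * s + δ_H / 2 * s ^ 2 - σ / 12 * s ^ 3 := by
    have h1 := (abs_le.mp hTaylor).2
    have h2 : ⟪g, η⟫ - ⟪G, η⟫ ≤ δ_g * ‖η‖ := by
      rw [← inner_sub_left]
      refine (real_inner_le_norm _ _).trans ?_
      rw [norm_sub_rev]
      exact mul_le_mul_of_nonneg_right hGg hs
    have h3 : ⟪A η, η⟫ - ⟪H η, η⟫ ≤ δ_H * ‖η‖ ^ 2 := by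
      rw [← inner_sub_left]
      refine (real_inner_le_norm _ _).trans ?_
      rw [norm_sub_rev]
      have h := mul_le_mul_of_nonneg_right hHa hs
      rw [sub_apply] at h
      linarith
    have h4 : L_H / 2 * ‖η‖ ^ 3 ≤ σ / 4 * ‖η‖ ^ 3 :=
      mul_le_mul_of_nonneg_right (by linarith) (by positivity)
    rw [hm η, hsd]
    linarith
  rw [← hsd] at hs
  obtain ⟨d, hdd⟩ : ∃ d, d = δ_H / σ := ⟨_, rfl⟩
  have hδd : δ_H = σ * d := by rw [hdd]; field_simp
  have hd0 : 0 < d := by rw [hdd]; positivity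
  have hg2 : δ_g ≤ σ * (9 / 4 * d ^ 2) := by
    refine hδgH.trans (le_of_eq ?_)
    rw [hδd]; field_simp
  have herr2 : f1 - f0 - m η ≤ σ * (9 / 4 * d ^ 2 * s + d / 2 * s ^ 2 - s ^ 3 / 12) := by
    have := mul_le_mul_of_nonneg_right hg2 hs
    rw [hδd] at herr
    linarith
  have hm0 : 0 ≤ -m η := by
    have : 0 ≤ 2 / 3 * σ * r ^ 3 := by positivity
    linarith
  have hprod : 0 ≤ (1 - ρ_TH) * (-m η) := mul_nonneg (by linarith) hm0
  rcases le_total (9 * d) s with h9 | h9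
  · have : 9 / 4 * d ^ 2 * s + d / 2 * s ^ 2 - s ^ 3 / 12 ≤ 0 := by
      have h : 0 ≤ s * (s - 9 * d) * (s + 3 * d) :=
        mul_nonneg (mul_nonneg hs (by linarith)) (by linarith)
      linarith
    have := mul_nonpos_of_nonneg_of_nonpos hσ.le this
    linarith
  · have hdr : d ≤ r / 9 := by
      rw [hδd] at hd1
      exact le_of_mul_le_mul_left (by linarith) hσ
    have hdr2 : d ≤ (1 - ρ_TH) * (2 / 9 * r) := by
      rw [hδd] at hd2
      exact le_of_mul_le_mul_left (by linarith) hσ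
    have e1 : 9 / 4 * d ^ 2 * s ≤ 9 / 4 * d ^ 2 * (9 * d) :=
      mul_le_mul_of_nonneg_left h9 (by positivity)
    have e2 : d / 2 * s ^ 2 ≤ d / 2 * (9 * d) ^ 2 := by gcongr
    have e3 : 0 ≤ s ^ 3 := by positivity
    have e4 : d ^ 2 * d ≤ (r / 9) ^ 2 * ((1 - ρ_TH) * (2 / 9 * r)) := by gcongr
    have e5 : 9 / 4 * d ^ 2 * s + d / 2 * s ^ 2 - s ^ 3 / 12 ≤ (1 - ρ_TH) * (2 / 3 * r ^ 3) := by
      have : 0 ≤ (1 - ρ_TH) * r ^ 3 := mul_nonneg (by linarith) (by positivity)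
      linarith
    have e6 := mul_le_mul_of_nonneg_left e5 hσ.le
    have e7 : (1 - ρ_TH) * (2 / 3 * σ * r ^ 3) ≤ (1 - ρ_TH) * (-m η) :=
      mul_le_mul_of_nonneg_left (by linarith) (by linarith)
    linarith
end

section
/- Assume: ‖H‖ ≤ K_H; |f1 - f0 - ⟨g, η⟩ - (1/2)⟨A η, η⟩| ≤ (L_H/2)‖η‖³; ‖G - g‖ ≤ δ_g; ‖(H - A) η‖ ≤ δ_H ‖η‖; σ ≥ 2 L_H; δ_g ≤ 9 δ_H² / (4σ); there is a unit vector u ∈ E with ⟨u, H u⟩ ≤ ν λ_min(H) < 0 and ⟨G, u⟩ ≤ 0, and η^E := t* u where t* ≥ 0 is a global minimizer of t ↦ m(t u) over t ≥ 0; m(η) ≤ m(η^E); λ_min(H) < -ε_H; and δ_H ≤ min{1/9, 2(1-ρ_TH)/9} · ν ε_H. Then f0 - f1 ≥ ρ_TH · (-m(η)), i.e., the acceptance ratio ρ = (f0 - f1)/(-m(η)) satisfies ρ ≥ ρ_TH. (Lemma 3.3, case (b).) -/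
open RealInnerProductSpace

/-- Lemma 3.3, case (b): with large negative curvature and sufficiently accurate
gradient/Hessian approximations, the iteration is successful. -/
theorem success_criterion_curvature_case
    {E : Type*} [NormedAddCommGroup E] [InnerProductSpace ℝ E] [FiniteDimensional ℝ E]
    (G g η : E) (H A : E →L[ℝ] E) (hH : IsSelfAdjoint H) (hA : IsSelfAdjoint A)
    (σ L_H K_H ν δ_g δ_H ε_H ρ_TH : ℝ) (hσ : 0 < σ) (hL : 0 < L_H) (hK : 0 < K_H)
    (hν : ν ∈ Set.Ioo (0 : ℝ) 1)
    (hδg : δ_g ∈ Set.Ioo (0 : ℝ) 1) (hδH : δ_H ∈ Set.Ioo (0 : ℝ) 1)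
    (hεH : ε_H ∈ Set.Ioo (0 : ℝ) 1) (hρ : ρ_TH ∈ Set.Ioo (0 : ℝ) 1)
    (m : E → ℝ)
    (hm : ∀ ξ : E, m ξ = ⟪G, ξ⟫ + (1 / 2) * ⟪H ξ, ξ⟫ + (σ / 3) * ‖ξ‖ ^ 3)
    (lammin : ℝ)
    (hlam : lammin = sInf ((fun u : E => ⟪u, H u⟫) '' {u : E | ‖u‖ = 1}))
    (f0 f1 : ℝ)
    (hHK : ‖H‖ ≤ K_H)
    (hTaylor : |f1 - f0 - ⟪g, η⟫ - (1 / 2) * ⟪A η, η⟫| ≤ (L_H / 2) * ‖η‖ ^ 3)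
    (hGg : ‖G - g‖ ≤ δ_g)
    (hHa : ‖(H - A) η‖ ≤ δ_H * ‖η‖)
    (hσL : σ ≥ 2 * L_H)
    (hδgH : δ_g ≤ 9 * δ_H ^ 2 / (4 * σ))
    (u : E) (hu : ‖u‖ = 1)
    (hcurv : ⟪u, H u⟫ ≤ ν * lammin) (hneg : ν * lammin < 0)
    (hGu : ⟪G, u⟫ ≤ 0)
    (tstar : ℝ) (ht : 0 ≤ tstar)
    (hmin : ∀ t : ℝ, 0 ≤ t → m (tstar • u) ≤ m (t • u))
    (ηE : E) (hηE : ηE = tstar • u)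
    (hmη : m η ≤ m ηE)
    (hlamsmall : lammin < -ε_H)
    (hδHsmall : δ_H ≤ min (1 / 9) (2 * (1 - ρ_TH) / 9) * ν * ε_H) :
    f0 - f1 ≥ ρ_TH * (-m η) := by
  obtain ⟨hν0, hν1⟩ := hν
  obtain ⟨hδ0, -⟩ := hδH
  obtain ⟨hε0, -⟩ := hεH
  obtain ⟨hρ0, hρ1⟩ := hρ
  set c : ℝ := -(ν * lammin) with hc
  have hc0 : 0 < c := by linarith
  have hcε : ν * ε_H ≤ c := by
    have := mul_le_mul_of_nonneg_left hlamsmall.le hν0.le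
    linarith
  -- model decrease
  have h1 : m η ≤ -(c ^ 3 / (6 * σ ^ 2)) := by
    have ht0 : 0 ≤ c / σ := by positivity
    have h2 := hmin (c / σ) ht0
    have h3 : m ((c / σ) • u) = (c / σ) * ⟪G, u⟫ + (1 / 2) * ((c / σ) ^ 2 * ⟪u, H u⟫)
        + (σ / 3) * (c / σ) ^ 3 := by
      rw [hm, map_smul, inner_smul_right, inner_smul_right, real_inner_smul_left, norm_smul, hu,
        real_inner_comm u (H u), Real.norm_of_nonneg ht0]
      ring
    have h4 : (c / σ) * ⟪G, u⟫ ≤ 0 := mul_nonpos_of_nonneg_of_nonpos ht0 hGu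
    have h5 : (c / σ) ^ 2 * ⟪u, H u⟫ ≤ (c / σ) ^ 2 * (-c) :=
      mul_le_mul_of_nonneg_left (by linarith) (by positivity)
    have h6 : (1 / 2) * ((c / σ) ^ 2 * (-c)) + (σ / 3) * (c / σ) ^ 3
        = -(c ^ 3 / (6 * σ ^ 2)) := by
      field_simp
      ring
    rw [hηE] at hmη
    linarith
  -- model error
  set s : ℝ := ‖η‖ with hs
  have hs0 : 0 ≤ s := norm_nonneg η
  have h7 : -⟪G - g, η⟫ ≤ δ_g * s := by
    have := (abs_le.mp (abs_real_inner_le_norm (G - g) η)).1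
    have h := mul_le_mul_of_nonneg_right hGg hs0
    linarith
  have h8 : -⟪(H - A) η, η⟫ ≤ δ_H * s * s := by
    have := (abs_le.mp (abs_real_inner_le_norm ((H - A) η) η)).1
    have h := mul_le_mul_of_nonneg_right hHa hs0
    linarith
  have h9 := (abs_le.mp hTaylor).2
  rw [inner_sub_left] at h7
  rw [sub_apply, inner_sub_left] at h8
  have h10 := hm η
  rw [← hs] at h10
  have h11 : L_H / 2 * s ^ 3 ≤ σ / 4 * s ^ 3 :=
    mul_le_mul_of_nonneg_right (by linarith) (by positivity)
  have h12 : f1 - f0 - m η ≤ δ_g * s + δ_H * s ^ 2 / 2 - σ / 12 * s ^ 3 := by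
    linarith
  have h13 : δ_g * s ≤ 9 * δ_H ^ 2 / (4 * σ) * s := mul_le_mul_of_nonneg_right hδgH hs0
  have h14 : 9 * δ_H ^ 2 / (4 * σ) * s + δ_H * s ^ 2 / 2 - σ / 12 * s ^ 3
      ≤ 18 * δ_H ^ 3 / σ ^ 2 := by
    have e : 18 * δ_H ^ 3 / σ ^ 2 - (9 * δ_H ^ 2 / (4 * σ) * s + δ_H * s ^ 2 / 2 - σ / 12 * s ^ 3)
        = ((σ * s - 6 * δ_H) ^ 2 * (σ * s + 6 * δ_H) / 12 + 3 / 4 * δ_H ^ 2 * (σ * s)) / σ ^ 2 := by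
      field_simp
      ring
    have : 0 ≤ ((σ * s - 6 * δ_H) ^ 2 * (σ * s + 6 * δ_H) / 12
        + 3 / 4 * δ_H ^ 2 * (σ * s)) / σ ^ 2 := by positivity
    linarith
  have hνε : 0 < ν * ε_H := mul_pos hν0 hε0
  rw [mul_assoc] at hδHsmall
  have h15 : δ_H ≤ 1 / 9 * c :=
    (hδHsmall.trans (mul_le_mul_of_nonneg_right (min_le_left _ _) hνε.le)).trans (by linarith)
  have h16 : δ_H ≤ 2 * (1 - ρ_TH) / 9 * c :=
    (hδHsmall.trans (mul_le_mul_of_nonneg_right (min_le_right _ _) hνε.le)).trans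
      (mul_le_mul_of_nonneg_left hcε (by linarith))
  have h17 : 18 * δ_H ^ 3 ≤ (1 - ρ_TH) * c ^ 3 / 6 := by
    have a1 : δ_H ^ 2 ≤ (1 / 9 * c) ^ 2 := pow_le_pow_left₀ hδ0.le h15 2
    have a2 : δ_H ^ 2 * δ_H ≤ (1 / 9 * c) ^ 2 * (2 * (1 - ρ_TH) / 9 * c) :=
      mul_le_mul a1 h16 hδ0.le (by positivity)
    have a3 : 0 < (1 - ρ_TH) * c ^ 3 := mul_pos (by linarith) (by positivity)
    linarith
  have h18 : 18 * δ_H ^ 3 / σ ^ 2 ≤ (1 - ρ_TH) * (c ^ 3 / (6 * σ ^ 2)) := by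
    have e : (1 - ρ_TH) * (c ^ 3 / (6 * σ ^ 2)) = (1 - ρ_TH) * c ^ 3 / 6 / σ ^ 2 := by
      field_simp
    rw [e]
    exact div_le_div_of_nonneg_right h17 (by positivity)
  have h19 : (1 - ρ_TH) * (c ^ 3 / (6 * σ ^ 2)) ≤ (1 - ρ_TH) * (-m η) :=
    mul_le_mul_of_nonneg_left (by linarith) (by linarith)
  linarith
end

section
/- Assume: ‖H‖ ≤ K_H; |f1 - f0 - ⟨g, η⟩ - (1/2)⟨A η, η⟩| ≤ (L_H/2)‖η‖³; G = g exactly; ‖(H - A) η‖ ≤ δ_H ‖η‖; σ ≥ 2 L_H; η^C := -α G where α ≥ 0 is a global minimizer of t ↦ m(-t G) over t ≥ 0; m(η) ≤ m(η^C); ‖G‖ > ε_g; and δ_H ≤ min{1/12, (1-ρ_TH)/6} · (√(K_H² + 4σ ε_g) - K_H). Then f0 - f1 ≥ ρ_TH · (-m(η)). (The success criterion underlying Corollary 3.2, case of a large inexact gradient with exact gradient information.) -/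
open RealInnerProductSpace

/-- The success criterion underlying Corollary 3.2, large-gradient case
with exact gradient information. -/
theorem success_criterion_gradient_case_exact_gradient
    {E : Type*} [NormedAddCommGroup E] [InnerProductSpace ℝ E] [FiniteDimensional ℝ E]
    (G g η : E) (H A : E →L[ℝ] E) (hH : IsSelfAdjoint H) (hA : IsSelfAdjoint A)
    (σ L_H K_H δ_H ε_g ρ_TH : ℝ) (hσ : 0 < σ) (hL : 0 < L_H) (hK : 0 < K_H)
    (hδH : δ_H ∈ Set.Ioo (0 : ℝ) 1)
    (hεg : ε_g ∈ Set.Ioo (0 : ℝ) 1) (hρ : ρ_TH ∈ Set.Ioo (0 : ℝ) 1)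
    (m : E → ℝ)
    (hm : ∀ ξ : E, m ξ = ⟪G, ξ⟫ + (1 / 2) * ⟪H ξ, ξ⟫ + (σ / 3) * ‖ξ‖ ^ 3)
    (f0 f1 : ℝ)
    (hHK : ‖H‖ ≤ K_H)
    (hTaylor : |f1 - f0 - ⟪g, η⟫ - (1 / 2) * ⟪A η, η⟫| ≤ (L_H / 2) * ‖η‖ ^ 3)
    (hGg : G = g)
    (hHa : ‖(H - A) η‖ ≤ δ_H * ‖η‖)
    (hσL : σ ≥ 2 * L_H)
    (α : ℝ) (hα : 0 ≤ α)
    (hmin : ∀ t : ℝ, 0 ≤ t → m (-(α • G)) ≤ m (-(t • G)))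
    (ηC : E) (hηC : ηC = -(α • G))
    (hmη : m η ≤ m ηC)
    (hGbig : ‖G‖ > ε_g)
    (hδHsmall : δ_H ≤ min (1 / 12) ((1 - ρ_TH) / 6) * (Real.sqrt (K_H ^ 2 + 4 * σ * ε_g) - K_H)) :
    f0 - f1 ≥ ρ_TH * (-m η) := by
  obtain ⟨hδ0, -⟩ := hδH
  obtain ⟨hε0, -⟩ := hεg
  obtain ⟨hρ0, hρ1⟩ := hρ
  subst hGg
  subst hηC
  have hG0 : 0 < ‖G‖ := hε0.trans hGbig
  set q := Real.sqrt (K_H ^ 2 + 4 * σ * ε_g) with hq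
  have hσε : 0 < σ * ε_g := mul_pos hσ hε0
  have hqsq : q ^ 2 = K_H ^ 2 + 4 * σ * ε_g := Real.sq_sqrt (by nlinarith [sq_nonneg K_H])
  have hqK : K_H < q := by
    apply Real.lt_sqrt_of_sq_lt
    nlinarith
  obtain ⟨s, hs⟩ : ∃ s : ℝ, q = 2 * σ * s + K_H := ⟨(q - K_H) / (2 * σ), by field_simp; ring⟩
  have hs0 : 0 < s := by
    by_contra h
    push Not at h
    nlinarith
  have hsε : σ * s ^ 2 + K_H * s = ε_g := by
    rw [hs] at hqsq
    have : σ * (σ * s ^ 2 + K_H * s) = σ * ε_g := by nlinarith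
    exact mul_left_cancel₀ hσ.ne' this
  have hS : q - K_H = 2 * σ * s := by linarith
  rw [hS] at hδHsmall
  have hσs : 0 < σ * s := mul_pos hσ hs0
  have hd1 : δ_H ≤ σ * s / 6 := by
    have := mul_le_mul_of_nonneg_right (min_le_left (1 / 12 : ℝ) ((1 - ρ_TH) / 6))
      (by linarith : 0 ≤ 2 * σ * s)
    linarith
  have hd2 : δ_H ≤ (1 - ρ_TH) * (σ * s) / 3 := by
    have := mul_le_mul_of_nonneg_right (min_le_right (1 / 12 : ℝ) ((1 - ρ_TH) / 6))
      (by linarith : 0 ≤ 2 * σ * s)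
    linarith
  -- Cauchy decrease
  have hdec : 2 / 3 * σ * s ^ 3 ≤ -m η := by
    have h1 := hmin (s / ‖G‖) (by positivity)
    have hn : ‖-((s / ‖G‖) • G)‖ = s := by
      rw [norm_neg, norm_smul, Real.norm_eq_abs, abs_of_pos (by positivity)]
      field_simp
    have h2 := hm (-((s / ‖G‖) • G))
    have h3 : ⟪G, -((s / ‖G‖) • G)⟫ = -(s * ‖G‖) := by
      rw [inner_neg_right, inner_smul_right, real_inner_self_eq_norm_sq]
      field_simp
    have h4 : ⟪H (-((s / ‖G‖) • G)), -((s / ‖G‖) • G)⟫ ≤ K_H * s ^ 2 := by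
      refine (real_inner_le_norm _ _).trans ?_
      have := H.le_opNorm (-((s / ‖G‖) • G))
      rw [hn] at this ⊢
      nlinarith [mul_le_mul_of_nonneg_right hHK hs0.le]
    rw [h3, hn] at h2
    have h5 : s * ε_g ≤ s * ‖G‖ := mul_le_mul_of_nonneg_left hGbig.le hs0.le
    have h6 : s * ε_g = σ * s ^ 3 + K_H * s ^ 2 := by rw [← hsε]; ring
    have h7 : 0 ≤ K_H * s ^ 2 := by positivity
    linarith
  have hT := (abs_le.mp hTaylor).2
  have hin : -(δ_H * ‖η‖ ^ 2) ≤ ⟪H η, η⟫ - ⟪A η, η⟫ := by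
    have h1 : ⟪H η, η⟫ - ⟪A η, η⟫ = ⟪(H - A) η, η⟫ := by
      rw [sub_apply, inner_sub_left]
    rw [h1]
    have h2 := (abs_le.mp (abs_real_inner_le_norm ((H - A) η) η)).1
    nlinarith [mul_le_mul_of_nonneg_right hHa (norm_nonneg η)]
  have hmη' := hm η
  set r := ‖η‖ with hr
  have hr0 : 0 ≤ r := norm_nonneg η
  have hLr : L_H / 2 * r ^ 3 ≤ σ / 4 * r ^ 3 :=
    mul_le_mul_of_nonneg_right (by linarith) (by positivity)
  have hmain : -m η + σ / 12 * r ^ 3 - δ_H / 2 * r ^ 2 ≤ f0 - f1 := by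
    linarith
  have hs3 : 0 < σ * s ^ 3 := by positivity
  have hρm : (1 - ρ_TH) * (2 / 3 * σ * s ^ 3) ≤ (1 - ρ_TH) * (-m η) :=
    mul_le_mul_of_nonneg_left hdec (by linarith)
  have hpos : 0 < (1 - ρ_TH) * (σ * s ^ 3) := mul_pos (by linarith) hs3
  have hr3 : 0 ≤ σ * r ^ 3 := by positivity
  rcases le_total s r with h | h
  · have h1 : δ_H ≤ σ * r / 6 := by linarith [mul_le_mul_of_nonneg_left h hσ.le]
    have h2 : δ_H * r ^ 2 ≤ σ * r / 6 * r ^ 2 := mul_le_mul_of_nonneg_right h1 (by positivity)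
    have h3 : σ * r / 6 * r ^ 2 = σ * r ^ 3 / 6 := by ring
    linarith
  · have h1 : δ_H * r ^ 2 ≤ δ_H * s ^ 2 :=
      mul_le_mul_of_nonneg_left (pow_le_pow_left₀ hr0 h 2) hδ0.le
    have h2 : δ_H * s ^ 2 ≤ (1 - ρ_TH) * (σ * s) / 3 * s ^ 2 :=
      mul_le_mul_of_nonneg_right hd2 (by positivity)
    have h3 : (1 - ρ_TH) * (σ * s) / 3 * s ^ 2 = (1 - ρ_TH) * (σ * s ^ 3) / 3 := by ring
    linarith
end

section
/- Assume: ‖H‖ ≤ K_H; |f1 - f0 - ⟨g, η⟩ - (1/2)⟨A η, η⟩| ≤ (L_H/2)‖η‖³; G = g exactly; ‖(H - A) η‖ ≤ δ_H ‖η‖; σ ≥ 2 L_H; there is a unit vector u ∈ E with ⟨u, H u⟩ ≤ ν λ_min(H) < 0 and ⟨G, u⟩ ≤ 0, and η^E := t* u where t* ≥ 0 is a global minimizer of t ↦ m(t u) over t ≥ 0; m(η) ≤ m(η^E); λ_min(H) < -ε_H; and δ_H ≤ min{1/6, (1-ρ_TH)/3} · ν ε_H. Then f0 - f1 ≥ ρ_TH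 · (-m(η)). (The success criterion underlying Corollary 3.2, negative-curvature case with exact gradient information.) -/
open RealInnerProductSpace

/-- The success criterion underlying Corollary 3.2, negative-curvature case
with exact gradient information. -/
theorem success_criterion_curvature_case_exact_gradient
    {E : Type*} [NormedAddCommGroup E] [InnerProductSpace ℝ E] [FiniteDimensional ℝ E]
    (G g η : E) (H A : E →L[ℝ] E) (hH : IsSelfAdjoint H) (hA : IsSelfAdjoint A)
    (σ L_H K_H ν δ_H ε_H ρ_TH : ℝ) (hσ : 0 < σ) (hL : 0 < L_H) (hK : 0 < K_H)
    (hν : ν ∈ Set.Ioo (0 : ℝ) 1) (hδH : δ_H ∈ Set.Ioo (0 : ℝ) 1)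
    (hεH : ε_H ∈ Set.Ioo (0 : ℝ) 1) (hρ : ρ_TH ∈ Set.Ioo (0 : ℝ) 1)
    (m : E → ℝ)
    (hm : ∀ ξ : E, m ξ = ⟪G, ξ⟫ + (1 / 2) * ⟪H ξ, ξ⟫ + (σ / 3) * ‖ξ‖ ^ 3)
    (lammin : ℝ)
    (hlam : lammin = sInf ((fun u : E => ⟪u, H u⟫) '' {u : E | ‖u‖ = 1}))
    (f0 f1 : ℝ)
    (hHK : ‖H‖ ≤ K_H)
    (hTaylor : |f1 - f0 - ⟪g, η⟫ - (1 / 2) * ⟪A η, η⟫| ≤ (L_H / 2) * ‖η‖ ^ 3)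
    (hGg : G = g)
    (hHa : ‖(H - A) η‖ ≤ δ_H * ‖η‖)
    (hσL : σ ≥ 2 * L_H)
    (u : E) (hu : ‖u‖ = 1)
    (hcurv : ⟪u, H u⟫ ≤ ν * lammin) (hneg : ν * lammin < 0)
    (hGu : ⟪G, u⟫ ≤ 0)
    (tstar : ℝ) (ht : 0 ≤ tstar)
    (hmin : ∀ t : ℝ, 0 ≤ t → m (tstar • u) ≤ m (t • u))
    (ηE : E) (hηE : ηE = tstar • u)
    (hmη : m η ≤ m ηE)
    (hlamsmall : lammin < -ε_H)
    (hδHsmall : δ_H ≤ min (1 / 6) ((1 - ρ_TH) / 3) * ν * ε_H) :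
    f0 - f1 ≥ ρ_TH * (-m η) := by
  obtain ⟨hν0, hν1⟩ := hν
  obtain ⟨hδ0, hδ1⟩ := hδH
  obtain ⟨hε0, hε1⟩ := hεH
  obtain ⟨hρ0, hρ1⟩ := hρ
  subst hGg hηE
  obtain ⟨c, hc⟩ : ∃ c, c = -⟪u, H u⟫ := ⟨_, rfl⟩
  have hcν : ν * ε_H ≤ c := by
    have := mul_le_mul_of_nonneg_left hlamsmall.le hν0.le
    linarith
  have hνε : 0 < ν * ε_H := mul_pos hν0 hε0
  have hc0 : 0 < c := by linarith
  have h1 : δ_H ≤ (1 / 6) * c := by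
    have : min (1 / 6) ((1 - ρ_TH) / 3) * (ν * ε_H) ≤ (1 / 6) * (ν * ε_H) :=
      mul_le_mul_of_nonneg_right (min_le_left _ _) hνε.le
    linarith
  have h2 : δ_H ≤ ((1 - ρ_TH) / 3) * c := by
    have : min (1 / 6) ((1 - ρ_TH) / 3) * (ν * ε_H) ≤ ((1 - ρ_TH) / 3) * (ν * ε_H) :=
      mul_le_mul_of_nonneg_right (min_le_right _ _) hνε.le
    have h3 : ((1 - ρ_TH) / 3) * (ν * ε_H) ≤ ((1 - ρ_TH) / 3) * c :=
      mul_le_mul_of_nonneg_left hcν (by linarith)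
    linarith
  have hd : ⟪(A - H) η, η⟫ ≤ δ_H * ‖η‖ ^ 2 := by
    have e1 := real_inner_le_norm ((A - H) η) η
    have e2 : ‖(A - H) η‖ = ‖(H - A) η‖ := by
      simp only [sub_apply]; exact norm_sub_rev _ _
    rw [e2] at e1
    have e3 := mul_le_mul_of_nonneg_right hHa (norm_nonneg η)
    linarith
  rw [sub_apply, inner_sub_left] at hd
  have hT := (abs_le.mp hTaylor).2
  have hmE := hmη.trans (hmin (c / σ) (by positivity))
  have hv : m ((c / σ) • u) ≤ -(c ^ 3 / (6 * σ ^ 2)) := by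
    rw [hm, map_smul, inner_smul_right, inner_smul_left, inner_smul_right, norm_smul, hu,
      real_inner_comm, real_inner_comm u (H u), Real.norm_of_nonneg (by positivity)]
    have hHu : ⟪u, H u⟫ = -c := by linarith
    have hGu' : ⟪u, G⟫ ≤ 0 := by rw [real_inner_comm]; exact hGu
    have e : c / σ * ⟪u, G⟫ ≤ 0 := mul_nonpos_of_nonneg_of_nonpos (by positivity) hGu'
    first
      | rw [hHu]
      | rw [real_inner_comm, hHu]
    have e3 : (1 / 2) * (c / σ * (c / σ * -c)) + σ / 3 * (c / σ * 1) ^ 3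
        = -(c ^ 3 / (6 * σ ^ 2)) := by field_simp; ring
    first
      | (simp only [conj_trivial]; linarith)
      | (rw [real_inner_comm] ; simp only [conj_trivial]; linarith)
  have hM : c ^ 3 / (6 * σ ^ 2) ≤ -m η := by linarith
  obtain ⟨r, hr⟩ : ∃ r, r = ‖η‖ := ⟨_, rfl⟩
  have hr0 : 0 ≤ r := hr ▸ norm_nonneg η
  have hmm := hm η
  rw [← hr] at hmm hT hd
  have hr3 : L_H * r ^ 3 ≤ σ / 2 * r ^ 3 :=
    mul_le_mul_of_nonneg_right (by linarith) (by positivity)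
  have key : δ_H * r ^ 2 / 2 - σ * r ^ 3 / 12 ≤ (1 - ρ_TH) * (c ^ 3 / (6 * σ ^ 2)) := by
    have k1 : 0 ≤ (σ * r - 4 * δ_H) ^ 2 * (σ * r + 2 * δ_H) := by positivity
    have k2 : δ_H * δ_H * δ_H ≤ ((1 / 6) * c) * ((1 / 6) * c) * (((1 - ρ_TH) / 3) * c) := by
      gcongr
    have k3 : 0 < (1 - ρ_TH) * c ^ 3 := mul_pos (by linarith) (by positivity)
    rw [← mul_div_assoc, le_div_iff₀ (by positivity)]
    linarith
  have k4 : (1 - ρ_TH) * (c ^ 3 / (6 * σ ^ 2)) ≤ (1 - ρ_TH) * (-m η) :=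
    mul_le_mul_of_nonneg_left hM (by linarith)
  linarith
end

section
/- Let σ : ℕ → ℝ be a sequence with σ(0) > 0, let γ > 1 and L_H > 0, and suppose for every k: either σ(k+1) = σ(k)/γ or σ(k+1) = γ σ(k), and moreover if σ(k) ≥ 2 L_H then σ(k+1) = σ(k)/γ. Then σ(k) ≤ max{σ(0), 2 γ L_H} for every k. (Lemma 3.4, the uniform upper bound on the cubic regularization parameters.) -/
/-- Lemma 3.4: the uniform upper bound on the cubic regularization parameters. -/
theorem sigma_uniformly_bounded
    (σ : ℕ → ℝ) (γ L_H : ℝ)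
    (hσ0 : 0 < σ 0) (hγ : 1 < γ) (hL : 0 < L_H)
    (hstep : ∀ k : ℕ, σ (k + 1) = σ k / γ ∨ σ (k + 1) = γ * σ k)
    (hsucc : ∀ k : ℕ, σ k ≥ 2 * L_H → σ (k + 1) = σ k / γ) :
    ∀ k : ℕ, σ k ≤ max (σ 0) (2 * γ * L_H) := by
  have hγ0 : 0 < γ := by linarith
  have hpos : ∀ k, 0 < σ k := by
    intro k
    induction k with
    | zero => exact hσ0
    | succ k ih =>
      rcases hstep k with h | h <;> rw [h] <;> positivity
  intro k
  induction k with
  | zero => exact le_max_left _ _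
  | succ k ih =>
    have hdiv : σ k / γ ≤ σ k := div_le_self (hpos k).le hγ.le
    by_cases hk : σ k ≥ 2 * L_H
    · rw [hsucc k hk]
      exact hdiv.trans ih
    · rcases hstep k with h | h
      · rw [h]
        exact hdiv.trans ih
      · rw [h]
        refine le_trans ?_ (le_max_right _ _)
        push Not at hk
        nlinarith
end

section
/- Suppose ε_g, ε_H ∈ (0,1), K_H > 0, L_H > 0, γ > 1, ν ∈ (0,1), 0 < σ ≤ 2 γ L_H, and set κ_σ := min{ ν³/(24 γ² L_H²), (1/(2√3)) · min{1/K_H, 1/√(2 γ L_H)} }. If either (i) ‖G‖ > ε_g and -m(η) ≥ (‖G‖/(2√3)) · min{‖G‖/K_H, √(‖G‖/σ)}, or (ii) λ_min(H) < -ε_H and -m(η) ≥ ν³ |λ_min(H)|³ / (6 σ²), then -m(η) ≥ κ_σ · min{ε_g², ε_H³}. (Estimate (19) in the proof of Lemma 3.5.) -/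
open RealInnerProductSpace

/-- Estimate (19) in the proof of Lemma 3.5. -/
theorem model_decrease_uniform_lower_bound
    {E : Type*} [NormedAddCommGroup E] [InnerProductSpace ℝ E] [FiniteDimensional ℝ E]
    (G : E) (H : E →L[ℝ] E) (hH : IsSelfAdjoint H)
    (σ K_H L_H γ ν ε_g ε_H : ℝ)
    (hεg : ε_g ∈ Set.Ioo (0 : ℝ) 1) (hεH : ε_H ∈ Set.Ioo (0 : ℝ) 1)
    (hK : 0 < K_H) (hL : 0 < L_H) (hγ : 1 < γ) (hν : ν ∈ Set.Ioo (0 : ℝ) 1)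
    (hσ : 0 < σ) (hσle : σ ≤ 2 * γ * L_H)
    (hHK : ‖H‖ ≤ K_H)
    (m : E → ℝ)
    (hm : ∀ ξ : E, m ξ = ⟪G, ξ⟫ + (1 / 2) * ⟪H ξ, ξ⟫ + (σ / 3) * ‖ξ‖ ^ 3)
    (lammin : ℝ)
    (hlam : lammin = sInf ((fun u : E => ⟪u, H u⟫) '' {u : E | ‖u‖ = 1}))
    (κσ : ℝ)
    (hκ : κσ = min (ν ^ 3 / (24 * γ ^ 2 * L_H ^ 2))
        ((1 / (2 * Real.sqrt 3)) * min (1 / K_H) (1 / Real.sqrt (2 * γ * L_H))))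
    (η : E)
    (hcase :
      (‖G‖ > ε_g ∧ -m η ≥ (‖G‖ / (2 * Real.sqrt 3)) * min (‖G‖ / K_H) (Real.sqrt (‖G‖ / σ))) ∨
      (lammin < -ε_H ∧ -m η ≥ ν ^ 3 * |lammin| ^ 3 / (6 * σ ^ 2))) :
    -m η ≥ κσ * min (ε_g ^ 2) (ε_H ^ 3) := by
  obtain ⟨hg0, hg1⟩ := hεg
  obtain ⟨hh0, hh1⟩ := hεH
  obtain ⟨hν0, hν1⟩ := hν
  have hγ0 : 0 < γ := by linarith
  have hS : 0 < 2 * γ * L_H := by positivity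
  have hmin0 : 0 ≤ min (ε_g ^ 2) (ε_H ^ 3) := le_min (by positivity) (by positivity)
  have h3 : 0 < Real.sqrt 3 := Real.sqrt_pos.mpr (by norm_num)
  have hsS : 0 < Real.sqrt (2 * γ * L_H) := Real.sqrt_pos.mpr hS
  rcases hcase with ⟨hG, hd⟩ | ⟨hl, hd⟩
  · refine le_trans ?_ hd
    set c := min (1 / K_H) (1 / Real.sqrt (2 * γ * L_H)) with hc
    have hc0 : 0 < c := lt_min (by positivity) (by positivity)
    have key : ε_g * c ≤ min (‖G‖ / K_H) (Real.sqrt (‖G‖ / σ)) := by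
      apply le_min
      · calc ε_g * c ≤ ‖G‖ * (1 / K_H) :=
              mul_le_mul hG.le (min_le_left _ _) hc0.le (norm_nonneg _)
          _ = ‖G‖ / K_H := by ring
      · calc ε_g * c ≤ ε_g * (1 / Real.sqrt (2 * γ * L_H)) :=
              mul_le_mul_of_nonneg_left (min_le_right _ _) hg0.le
          _ = ε_g / Real.sqrt (2 * γ * L_H) := by ring
          _ ≤ Real.sqrt ε_g / Real.sqrt (2 * γ * L_H) := by
              apply div_le_div_of_nonneg_right _ hsS.le
              apply Real.le_sqrt_of_sq_le
              nlinarith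
          _ = Real.sqrt (ε_g / (2 * γ * L_H)) := (Real.sqrt_div hg0.le _).symm
          _ ≤ Real.sqrt (‖G‖ / σ) := by
              apply Real.sqrt_le_sqrt
              exact div_le_div₀ (norm_nonneg _) hG.le hσ hσle
    calc κσ * min (ε_g ^ 2) (ε_H ^ 3)
        ≤ ((1 / (2 * Real.sqrt 3)) * c) * ε_g ^ 2 := by
          apply mul_le_mul _ (min_le_left _ _) hmin0 (by positivity)
          rw [hκ]; exact min_le_right _ _
      _ = (ε_g / (2 * Real.sqrt 3)) * (ε_g * c) := by ring
      _ ≤ _ := by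
          apply mul_le_mul _ key (by positivity) (by positivity)
          exact div_le_div_of_nonneg_right hG.le (by positivity)
  · refine le_trans ?_ hd
    have habs : ε_H ≤ |lammin| := by
      have := neg_le_abs lammin
      linarith
    calc κσ * min (ε_g ^ 2) (ε_H ^ 3)
        ≤ (ν ^ 3 / (24 * γ ^ 2 * L_H ^ 2)) * ε_H ^ 3 := by
          apply mul_le_mul _ (min_le_right _ _) hmin0 (by positivity)
          rw [hκ]; exact min_le_left _ _
      _ = ν ^ 3 * ε_H ^ 3 / (6 * (2 * γ * L_H) ^ 2) := by
          field_simp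
          ring
      _ ≤ ν ^ 3 * |lammin| ^ 3 / (6 * σ ^ 2) := by
          apply div_le_div₀ (by positivity) _ (by positivity) (by gcongr)
          gcongr
end

section
/- Let γ > 1, L_H > 0, 0 < σ₀ ≤ 2 γ L_H, N ∈ ℕ, and let S ⊆ {0, 1, ..., N-1}. Let σ : ℕ → ℝ satisfy σ(0) = σ₀ and, for each k < N, σ(k+1) = σ(k)/γ if k ∈ S and σ(k+1) = γ σ(k) if k ∉ S; assume σ(N) ≤ 2 γ L_H. Let f : ℕ → ℝ be nonincreasing with f(k) ≥ f_min for all k, let c > 0, and suppose f(k) - f(k+1) ≥ c for every k ∈ S with at most one exception. Then N ≤ 2 (f(0) - f_min)/c + 2 + log_γ(2 γ L_H / σ₀). (Theorem 3.1: with c = ρ_TH κ_σ min{ε_g², ε_H³}, the inexact Riemannian adaptive cubic regularization algorithm terminates after at most O(max{ε_g^{-2}, ε_H^{-3}}) iterations.) -/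
/-- Theorem 3.1: the total iteration bound for the inexact Riemannian adaptive
cubic regularization algorithm. -/
theorem total_iteration_bound
    (γ L_H σ₀ : ℝ) (hγ : 1 < γ) (hL : 0 < L_H)
    (hσ₀ : 0 < σ₀) (hσ₀le : σ₀ ≤ 2 * γ * L_H)
    (N : ℕ) (S : Finset ℕ) (hS : S ⊆ Finset.range N)
    (σ : ℕ → ℝ) (hσ0 : σ 0 = σ₀)
    (hstep : ∀ k < N, (k ∈ S → σ (k + 1) = σ k / γ) ∧ (k ∉ S → σ (k + 1) = γ * σ k))
    (hσN : σ N ≤ 2 * γ * L_H)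
    (f : ℕ → ℝ) (f_min c : ℝ)
    (hmono : ∀ k : ℕ, f (k + 1) ≤ f k)
    (hbdd : ∀ k : ℕ, f_min ≤ f k)
    (hc : 0 < c)
    (k₀ : ℕ)
    (hdec : ∀ k ∈ S, k ≠ k₀ → f k - f (k + 1) ≥ c) :
    (N : ℝ) ≤ 2 * (f 0 - f_min) / c + 2 + Real.logb γ (2 * γ * L_H / σ₀) := by
  have hγ0 : 0 < γ := by linarith
  have hlγ : Real.logb γ γ = 1 := Real.logb_self_eq_one hγ
  have h1 : ∀ n ≤ N, 0 < σ n ∧ Real.logb γ (σ n) = Real.logb γ σ₀ + n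
      - 2 * ∑ k ∈ Finset.range n, (if k ∈ S then (1 : ℝ) else 0) := by
    intro n
    induction n with
    | zero => intro _; simp [hσ0, hσ₀]
    | succ n ih =>
      intro hn
      obtain ⟨hp, he⟩ := ih (by omega)
      obtain ⟨ha, hb⟩ := hstep n (by omega)
      rw [Finset.sum_range_succ]
      by_cases h : n ∈ S
      · rw [ha h, Real.logb_div hp.ne' hγ0.ne', he, hlγ, if_pos h]
        refine ⟨by positivity, ?_⟩
        push_cast
        ring
      · rw [hb h, Real.logb_mul hγ0.ne' hp.ne', he, hlγ, if_neg h]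
        refine ⟨by positivity, ?_⟩
        push_cast
        ring
  have h2 : ∀ n : ℕ, c * ∑ k ∈ Finset.range n, (if k ∈ S then (1 : ℝ) else 0)
      ≤ f 0 - f n + c * ∑ k ∈ Finset.range n, (if k = k₀ then (1 : ℝ) else 0) := by
    intro n
    induction n with
    | zero => simp
    | succ n ih =>
      rw [Finset.sum_range_succ, Finset.sum_range_succ, mul_add, mul_add]
      have hm := hmono n
      by_cases h : n ∈ S <;> by_cases h' : n = k₀
      · rw [if_pos h, if_pos h']; linarith
      · have := hdec n h h'
        rw [if_pos h, if_neg h']; linarith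
      · rw [if_neg h, if_pos h']; linarith
      · rw [if_neg h, if_neg h']; linarith
  have h3 : ∑ k ∈ Finset.range N, (if k = k₀ then (1 : ℝ) else 0) ≤ 1 := by
    rw [Finset.sum_ite_eq']
    split_ifs <;> norm_num
  obtain ⟨hp, he⟩ := h1 N le_rfl
  have h4 := h2 N
  have h5 := hbdd N
  have h6 : Real.logb γ (σ N) ≤ Real.logb γ (2 * γ * L_H) :=
    Real.logb_le_logb_of_le hγ hp hσN
  have h7 : ∑ k ∈ Finset.range N, (if k ∈ S then (1 : ℝ) else 0) ≤ (f 0 - f_min) / c + 1 := by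
    rw [← sub_le_iff_le_add, le_div_iff₀ hc]
    nlinarith [mul_le_mul_of_nonneg_left h3 hc.le]
  rw [Real.logb_div (by positivity) hσ₀.ne', mul_div_assoc]
  linarith
end
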